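/- Let f : ℝ^d → ℝ be twice differentiable at x ∈ ℝ^d, let S ∈ ℝ^{l×d} and ŝ ∈ ℝ^l with Sᵀŝ ≠ 0, and let α > 0, θ ∈ (0,1), κ_S ≥ 0, S_max > 0, ε_H > 0. Assume: (a) ‖S‖ ≤ S_max; (b) λ_min( S∇²f(x)Sᵀ ) < −ε_H; (c) m̂(ŝ) ≤ f(x); (d) for every y ∈ ℝ^l, ⟨y, S∇²f(x)Sᵀ y⟩ + (1/α)·[ ‖Sᵀŝ‖^{-1}·⟨S Sᵀŝ, y⟩² + ‖Sᵀŝ‖·‖Sᵀy‖² ] ≥ −κ_S·‖Sᵀŝ‖·‖y‖²; (e) f(x) − f(x + Sᵀŝ) ≥ θ·( q̂(0) − q̂(ŝ) ). Then f(x) − f(x + Sᵀŝ) ≥ ( θ·ε_H³ / (3α) )·( 2·S_max²/α + κ_S )^{-3}. -/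

import Mathlib

open scoped BigOperators NNReal
open MeasureTheory ProbabilityTheory

namespace RARC

noncomputable def enorm {n : ℕ} (v : Fin n → ℝ) : ℝ := Real.sqrt (∑ i, v i ^ 2)

noncomputable def opNorm {m n : ℕ} (S : Matrix (Fin m) (Fin n) ℝ) : ℝ :=
  sSup {c : ℝ | ∃ v : Fin n → ℝ, enorm v = 1 ∧ c = enorm (S.mulVec v)}

noncomputable def grad {n : ℕ} (f : (Fin n → ℝ) → ℝ) (x : Fin n → ℝ) : Fin n → ℝ :=
  fun i => fderiv ℝ f x (Pi.single i 1)

noncomputable def hess {n : ℕ} (f : (Fin n → ℝ) → ℝ) (x : Fin n → ℝ) :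
    Matrix (Fin n) (Fin n) ℝ :=
  Matrix.of fun i j =>
    fderiv ℝ (fun y => fderiv ℝ f y (Pi.single j 1)) x (Pi.single i 1)

noncomputable def qhat {d l : ℕ} (f : (Fin d → ℝ) → ℝ) (x : Fin d → ℝ)
    (S : Matrix (Fin l) (Fin d) ℝ) (s : Fin l → ℝ) : ℝ :=
  f x + (∑ i, S.mulVec (grad f x) i * s i)
    + (1/2) * (∑ i, s i * (S * hess f x * S.transpose).mulVec s i)

noncomputable def mhat {d l : ℕ} (f : (Fin d → ℝ) → ℝ) (x : Fin d → ℝ)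
    (S : Matrix (Fin l) (Fin d) ℝ) (α : ℝ) (s : Fin l → ℝ) : ℝ :=
  qhat f x S s + (1/(3*α)) * enorm (S.transpose.mulVec s) ^ 3

noncomputable def lambdaMin {n : ℕ} (A : Matrix (Fin n) (Fin n) ℝ) : ℝ :=
  sInf {t : ℝ | ∃ v : Fin n → ℝ, enorm v = 1 ∧ t = ∑ i, v i * A.mulVec v i}

def LipschitzHessian {n : ℕ} (f : (Fin n → ℝ) → ℝ) (L : ℝ) : Prop :=
  ∀ x y : Fin n → ℝ, opNorm (hess f y - hess f x) ≤ L * enorm (y - x)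

noncomputable def augM {d : ℕ} (f : (Fin d → ℝ) → ℝ) (x : Fin d → ℝ) :
    Matrix (Fin d) (Fin (d+1)) ℝ :=
  Matrix.of fun i j => Fin.cases (grad f x i) (fun j' => hess f x i j') j

noncomputable def gaussVec (l : ℕ) : Measure (Fin l → ℝ) :=
  Measure.pi fun _ => gaussianReal 0 (l : ℝ≥0)⁻¹

noncomputable def scaledGaussian (l d : ℕ) : Measure (Fin l → Fin d → ℝ) :=
  Measure.pi fun _ : Fin l => Measure.pi fun _ : Fin d => gaussianReal 0 (l : ℝ≥0)⁻¹


theorem enorm_nonneg' {n : ℕ} (v : Fin n → ℝ) : 0 ≤ enorm v := Real.sqrt_nonneg _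

theorem enorm_sq' {n : ℕ} (v : Fin n → ℝ) : enorm v ^ 2 = ∑ i, v i ^ 2 :=
  Real.sq_sqrt (Finset.sum_nonneg fun i _ => sq_nonneg _)

theorem enorm_pos' {n : ℕ} (v : Fin n → ℝ) (hv : v ≠ 0) : 0 < enorm v := by
  obtain ⟨i, hi⟩ := Function.ne_iff.mp hv
  apply Real.sqrt_pos.mpr
  exact Finset.sum_pos' (fun i _ => sq_nonneg _) ⟨i, Finset.mem_univ _, by
    have : v i ≠ 0 := hi
    positivity⟩

theorem enorm_smul' {n : ℕ} (c : ℝ) (hc : 0 ≤ c) (v : Fin n → ℝ) :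
    enorm (c • v) = c * enorm v := by
  unfold enorm
  simp only [Pi.smul_apply, smul_eq_mul, mul_pow, ← Finset.mul_sum]
  rw [Real.sqrt_mul (sq_nonneg c), Real.sqrt_sq hc]

theorem dot_sq_le' {n : ℕ} (v w : Fin n → ℝ) : (v ⬝ᵥ w) ^ 2 ≤ enorm v ^ 2 * enorm w ^ 2 := by
  rw [enorm_sq', enorm_sq']
  exact Finset.sum_mul_sq_le_sq_mul_sq _ _ _

theorem opNorm_bdd {m n : ℕ} (S : Matrix (Fin m) (Fin n) ℝ) :
    BddAbove {c : ℝ | ∃ v : Fin n → ℝ, enorm v = 1 ∧ c = enorm (S.mulVec v)} := by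
  refine ⟨Real.sqrt (∑ i, enorm (S i) ^ 2), ?_⟩
  rintro c ⟨v, hv, rfl⟩
  apply Real.sqrt_le_sqrt
  apply Finset.sum_le_sum
  intro i _
  have := dot_sq_le' (S i) v
  rw [hv] at this
  simpa [Matrix.mulVec] using this

theorem le_opNorm' {m n : ℕ} (S : Matrix (Fin m) (Fin n) ℝ) (w : Fin n → ℝ) (hw : w ≠ 0) :
    enorm (S.mulVec w) ≤ opNorm S * enorm w := by
  have hp := enorm_pos' w hw
  have h : (enorm w)⁻¹ * enorm (S.mulVec w) ≤ opNorm S := by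
    apply le_csSup (opNorm_bdd S)
    refine ⟨(enorm w)⁻¹ • w, ?_, ?_⟩
    · rw [enorm_smul' _ (by positivity)]; field_simp
    · rw [Matrix.mulVec_smul, enorm_smul' _ (by positivity)]
  rwa [inv_mul_le_iff₀ hp, mul_comm] at h

theorem dot_self' {n : ℕ} (v : Fin n → ℝ) : v ⬝ᵥ v = enorm v ^ 2 := by
  rw [enorm_sq']; simp [dotProduct, sq]

theorem transpose_dot {m n : ℕ} (S : Matrix (Fin m) (Fin n) ℝ) (a b : Fin m → ℝ) :
    (S * S.transpose).mulVec a ⬝ᵥ b = S.transpose.mulVec a ⬝ᵥ S.transpose.mulVec b := by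
  rw [← Matrix.mulVec_mulVec, dotProduct_comm, Matrix.dotProduct_mulVec,
    ← Matrix.mulVec_transpose, dotProduct_comm]

theorem transpose_le {m n : ℕ} (S : Matrix (Fin m) (Fin n) ℝ) (M : ℝ) (hM : 0 < M)
    (ha : opNorm S ≤ M) (v : Fin m → ℝ) (hv : enorm v = 1) :
    enorm (S.transpose.mulVec v) ≤ M := by
  by_cases hw : S.transpose.mulVec v = 0
  · rw [hw]; simpa [enorm] using hM.le
  have hp := enorm_pos' _ hw
  have h1 := le_opNorm' S _ hw
  have h2 := transpose_dot S v v
  rw [dot_self', ← Matrix.mulVec_mulVec] at h2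
  have h3 := dot_sq_le' (S.mulVec (S.transpose.mulVec v)) v
  rw [h2, hv] at h3
  have h4 : enorm (S.transpose.mulVec v) ^ 2 ≤ enorm (S.mulVec (S.transpose.mulVec v)) := by
    apply (sq_le_sq₀ (sq_nonneg _) (enorm_nonneg' _)).mp
    simpa using h3
  have h5 := mul_le_mul_of_nonneg_right ha hp.le
  nlinarith

theorem stmt16 {d l : ℕ} (f : (Fin d → ℝ) → ℝ) (x : Fin d → ℝ)
    (hf1 : DifferentiableAt ℝ f x) (hf2 : DifferentiableAt ℝ (fderiv ℝ f) x)
    (S : Matrix (Fin l) (Fin d) ℝ) (sh : Fin l → ℝ)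
    (hs : S.transpose.mulVec sh ≠ 0)
    (α θ κ_S S_max ε_H : ℝ) (hα : 0 < α) (hθ : θ ∈ Set.Ioo (0:ℝ) 1)
    (hκ : 0 ≤ κ_S) (hSmax : 0 < S_max) (hεH : 0 < ε_H)
    (ha : opNorm S ≤ S_max)
    (hb : lambdaMin (S * hess f x * S.transpose) < -ε_H)
    (hc : mhat f x S α sh ≤ f x)
    (hd : ∀ y : Fin l → ℝ,
      (∑ i, y i * (S * hess f x * S.transpose).mulVec y i)
        + (1/α) * ((enorm (S.transpose.mulVec sh))⁻¹
              * (∑ i, (S * S.transpose).mulVec sh i * y i) ^ 2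
            + enorm (S.transpose.mulVec sh) * enorm (S.transpose.mulVec y) ^ 2)
        ≥ -κ_S * enorm (S.transpose.mulVec sh) * enorm y ^ 2)
    (he : f x - f (x + S.transpose.mulVec sh) ≥ θ * (qhat f x S 0 - qhat f x S sh)) :
    f x - f (x + S.transpose.mulVec sh)
      ≥ (θ * ε_H ^ 3 / (3 * α)) * ((2 * S_max ^ 2 / α + κ_S) ^ 3)⁻¹ := by
  have ht := enorm_pos' _ hs
  set t := enorm (S.transpose.mulVec sh) with htdef
  have hne : {t : ℝ | ∃ v : Fin l → ℝ, enorm v = 1 ∧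
      t = ∑ i, v i * (S * hess f x * S.transpose).mulVec v i}.Nonempty := by
    by_contra h
    rw [Set.not_nonempty_iff_eq_empty] at h
    rw [lambdaMin, h, Real.sInf_empty] at hb
    linarith
  obtain ⟨_, ⟨v, hv, rfl⟩, hlt⟩ := exists_lt_of_csInf_lt hne hb
  have hdv := hd v
  have hM := transpose_le S S_max hSmax ha v hv
  have hM2 : enorm (S.transpose.mulVec v) ^ 2 ≤ S_max ^ 2 :=
    pow_le_pow_left₀ (enorm_nonneg' _) hM 2
  have hdot : (∑ i, (S * S.transpose).mulVec sh i * v i) ^ 2 ≤ t ^ 2 * S_max ^ 2 := by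
    have h1 := dot_sq_le' (S.transpose.mulVec sh) (S.transpose.mulVec v)
    rw [← transpose_dot] at h1
    exact h1.trans (mul_le_mul_of_nonneg_left hM2 (sq_nonneg _))
  have h6 : t⁻¹ * (∑ i, (S * S.transpose).mulVec sh i * v i) ^ 2 ≤ t * S_max ^ 2 := by
    rw [inv_mul_le_iff₀ ht]; linarith
  have h7 := mul_le_mul_of_nonneg_left hM2 ht.le
  have h8 := mul_le_mul_of_nonneg_left (add_le_add h6 h7) (one_div_pos.mpr hα).le
  rw [hv] at hdv
  have h9 : ε_H ≤ (2 * S_max ^ 2 / α + κ_S) * t := by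
    have : (1 / α) * (t * S_max ^ 2 + t * S_max ^ 2) = 2 * S_max ^ 2 / α * t := by ring
    linarith
  have hK : 0 < 2 * S_max ^ 2 / α + κ_S := by positivity
  have hq0 : qhat f x S 0 = f x := by simp [qhat]
  have h10 : 1 / (3 * α) * t ^ 3 ≤ qhat f x S 0 - qhat f x S sh := by
    rw [hq0]; unfold mhat at hc; linarith
  have h11 := mul_le_mul_of_nonneg_left h10 hθ.1.le
  have h12 : ε_H ^ 3 * ((2 * S_max ^ 2 / α + κ_S) ^ 3)⁻¹ ≤ t ^ 3 := by
    rw [mul_inv_le_iff₀ (by positivity), mul_comm, ← mul_pow]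
    exact pow_le_pow_left₀ hεH.le h9 3
  have h13 : 0 ≤ θ * (1 / (3 * α)) := mul_nonneg hθ.1.le (by positivity)
  have h14 := mul_le_mul_of_nonneg_left h12 h13
  have h15 : (θ * ε_H ^ 3 / (3 * α)) * ((2 * S_max ^ 2 / α + κ_S) ^ 3)⁻¹ =
    θ * (1 / (3 * α)) * (ε_H ^ 3 * ((2 * S_max ^ 2 / α + κ_S) ^ 3)⁻¹) := by ring
  rw [h15]
  linarith

end RARC
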